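/- For every r ≥ 2 and every n ≥ 1, t^(r)(n) ≥ ⌊L_r(n)/2⌋; consequently, combined with the bound L_r(n) ≥ (1/2)·n^{1/(2^r−1)}, one gets t^(r)(n) = Ω(n^{1/(2^r − 1)}), i.e., t^(r)(n) ≥ ⌊(1/4)·n^{1/(2^r−1)}⌋ for all n ≥ 1. -/

import Mathlib

/-- A (sub-)matching: a finite set of pairwise disjoint `r`-element subsets
("edges") of the linearly ordered vertex set `ℕ`. -/
def IsMatching (r : ℕ) (M : Finset (Finset ℕ)) : Prop :=
  (∀ e ∈ M, e.card = r) ∧ ∀ e ∈ M, ∀ f ∈ M, e ≠ f → Disjoint e f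

/-- The vertex support of a matching: the union of its edges. -/
def mSupport (M : Finset (Finset ℕ)) : Finset ℕ := M.sup id

/-- An ordered `r`-matching of size `n`: `n` pairwise disjoint `r`-element edges
partitioning `[rn] = {1, …, rn}`. -/
def IsOrderedMatching (r n : ℕ) (M : Finset (Finset ℕ)) : Prop :=
  IsMatching r M ∧ M.card = n ∧ mSupport M = Finset.Icc 1 (r * n)

/-- Two ordered matchings are isomorphic if some (equivalently, the unique)
order-preserving bijection between their vertex supports maps edges onto edges. -/
def MatchIso (M N : Finset (Finset ℕ)) : Prop :=
  ∃ f : ℕ → ℕ, Set.BijOn f (mSupport M : Set ℕ) (mSupport N : Set ℕ) ∧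
    (∀ x ∈ mSupport M, ∀ y ∈ mSupport M, x < y → f x < f y) ∧
    N = M.image fun e => e.image f

/-- `M` contains twins of size `k`: a pair of vertex-disjoint isomorphic
sub-matchings of `M`, each with `k` edges. -/
def HasTwins (M : Finset (Finset ℕ)) (k : ℕ) : Prop :=
  ∃ M₁ M₂ : Finset (Finset ℕ), M₁ ⊆ M ∧ M₂ ⊆ M ∧
    Disjoint (mSupport M₁) (mSupport M₂) ∧ MatchIso M₁ M₂ ∧
    M₁.card = k ∧ M₂.card = k

/-- `t(M)`: the maximum size of twins in `M`. -/
noncomputable def twinMax (M : Finset (Finset ℕ)) : ℕ := sSup {k | HasTwins M k}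

/-- `t^(r)(n)`: the minimum of `t(M)` over all ordered `r`-matchings of size `n`. -/
noncomputable def minTwins (r n : ℕ) : ℕ :=
  sInf {t | ∃ M, IsOrderedMatching r n M ∧ twinMax M = t}

/-- A permutation `π` of `[n]` has twins of length `k`: two order-isomorphic
subsequences occupying disjoint sets of positions. -/
def PermTwins {n : ℕ} (π : Equiv.Perm (Fin n)) (k : ℕ) : Prop :=
  ∃ a b : Fin k → Fin n, StrictMono a ∧ StrictMono b ∧
    (∀ i j, a i ≠ b j) ∧ ∀ i j, (π (a i) < π (a j) ↔ π (b i) < π (b j))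

/-- `τ(n)`: the largest `k` such that every permutation of `[n]` has twins of length `k`. -/
noncomputable def permTau (n : ℕ) : ℕ :=
  sSup {k | ∀ π : Equiv.Perm (Fin n), PermTwins π k}

/-- An `r`-pattern, represented by its canonical representative: an ordered
`r`-matching of size `2` (on the vertex set `[2r]`). Every isomorphism class of
ordered `r`-matchings of size `2` contains exactly one such representative. -/
def IsPattern (r : ℕ) (P : Finset (Finset ℕ)) : Prop := IsOrderedMatching r 2 P

/-- A `P`-clique: a matching all of whose pairs of (distinct) edges form the pattern `P`. -/
def IsPClique (P M : Finset (Finset ℕ)) : Prop :=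
  ∀ e ∈ M, ∀ f ∈ M, e ≠ f → MatchIso {e, f} P

/-- `L(M)`: the size of the largest sub-matching of `M` that is a `P`-clique,
over all `r`-patterns `P`. -/
noncomputable def cliqueMax (r : ℕ) (M : Finset (Finset ℕ)) : ℕ :=
  sSup {k | ∃ P, IsPattern r P ∧ ∃ M' ⊆ M, IsPClique P M' ∧ M'.card = k}

/-- `L_r(n)`: the minimum of `L(M)` over all ordered `r`-matchings of size `n`. -/
noncomputable def minClique (r n : ℕ) : ℕ :=
  sInf {l | ∃ M, IsOrderedMatching r n M ∧ cliqueMax r M = l}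

/-- The `i`-th smallest vertex of an edge. -/
def vtx (e : Finset ℕ) (i : ℕ) : ℕ :=
  if h : i < e.card then e.orderEmbOfFin rfl ⟨i, h⟩ else 0

theorem vtx_mem {e : Finset ℕ} {i : ℕ} (h : i < e.card) : vtx e i ∈ e := by
  unfold vtx
  rw [dif_pos h]
  exact Finset.orderEmbOfFin_mem _ _ _

theorem vtx_lt {e : Finset ℕ} {i j : ℕ} (hij : i < j) (h : j < e.card) : vtx e i < vtx e j := by
  unfold vtx
  rw [dif_pos h, dif_pos (hij.trans h)]
  exact (e.orderEmbOfFin rfl).strictMono hij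

theorem vtx_surj {e : Finset ℕ} {x : ℕ} (h : x ∈ e) : ∃ i < e.card, vtx e i = x := by
  have h1 := Finset.range_orderEmbOfFin e rfl
  have h2 : x ∈ Set.range (e.orderEmbOfFin rfl) := by rw [h1]; exact h
  obtain ⟨i, hi⟩ := h2
  exact ⟨i, i.2, by unfold vtx; rw [dif_pos i.2]; exact hi⟩

theorem card_image_mono {e : Finset ℕ} {φ : ℕ → ℕ}
    (hφ : ∀ x ∈ e, ∀ y ∈ e, x < y → φ x < φ y) : (e.image φ).card = e.card := by
  apply Finset.card_image_of_injOn
  intro x hx y hy hxy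
  rcases lt_trichotomy x y with h | h | h
  · have := hφ x hx y hy h
    omega
  · exact h
  · have := hφ y hy x hx h
    omega

theorem vtx_image {e : Finset ℕ} {φ : ℕ → ℕ}
    (hφ : ∀ x ∈ e, ∀ y ∈ e, x < y → φ x < φ y) {i : ℕ} (hi : i < e.card) :
    vtx (e.image φ) i = φ (vtx e i) := by
  have hc := card_image_mono hφ
  have hu := Finset.orderEmbOfFin_unique (s := e.image φ) rfl
    (f := fun j : Fin (e.image φ).card => φ (vtx e j))
    (fun j => Finset.mem_image_of_mem _ (vtx_mem (hc ▸ j.2)))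
    (fun a b hab => hφ _ (vtx_mem (hc ▸ a.2)) _ (vtx_mem (hc ▸ b.2)) (vtx_lt hab (hc ▸ b.2)))
  have hi' : i < (e.image φ).card := by rw [hc]; exact hi
  have := congrFun hu ⟨i, hi'⟩
  simp only at this
  rw [this]
  unfold vtx
  rw [dif_pos hi']


theorem mirsky {α : Type*} [DecidableEq α] (S : Finset α) (lt : α → α → Prop)
    (irr : ∀ a, ¬ lt a a) (tr : ∀ a b c, lt a b → lt b c → lt a c) (k : ℕ)
    (hk : ∀ T ⊆ S, (∀ a ∈ T, ∀ b ∈ T, a ≠ b → lt a b ∨ lt b a) → T.card ≤ k) :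
    ∃ T ⊆ S, (∀ a ∈ T, ∀ b ∈ T, ¬ lt a b) ∧ S.card ≤ k * T.card := by
  classical
  let F : α → Finset (Finset α) := fun e => S.powerset.filter (fun T =>
    e ∈ T ∧ (∀ a ∈ T, ∀ b ∈ T, a ≠ b → lt a b ∨ lt b a) ∧ ∀ x ∈ T, x = e ∨ lt x e)
  let h : α → ℕ := fun e => (F e).sup Finset.card
  have hF : ∀ e T, T ∈ F e ↔ T ⊆ S ∧ e ∈ T ∧ (∀ a ∈ T, ∀ b ∈ T, a ≠ b → lt a b ∨ lt b a) ∧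
      ∀ x ∈ T, x = e ∨ lt x e := by
    intro e T
    simp [F]
  have hsing : ∀ e ∈ S, {e} ∈ F e := by
    intro e he
    rw [hF]
    refine ⟨by simpa using he, by simp, ?_, by simp⟩
    intro a ha b hb hab
    simp at ha hb
    exact absurd (ha.trans hb.symm) hab
  have hpos : ∀ e ∈ S, 1 ≤ h e := by
    intro e he
    have := Finset.le_sup (f := Finset.card) (hsing e he)
    rw [Finset.card_singleton] at this
    exact this
  have hle : ∀ e ∈ S, h e ≤ k := by
    intro e he
    apply Finset.sup_le
    intro T hT
    rw [hF] at hT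
    exact hk T hT.1 hT.2.2.1
  have hmono : ∀ e ∈ S, ∀ f ∈ S, lt e f → h e < h f := by
    intro e he f hf hef
    obtain ⟨T, hT, hTe⟩ := Finset.exists_mem_eq_sup (F e) ⟨_, hsing e he⟩ Finset.card
    have hT' := (hF e T).1 hT
    obtain ⟨h1, h2, h3, h4⟩ := hT'
    have hxf : ∀ x ∈ T, lt x f := by
      intro x hx
      rcases h4 x hx with rfl | h5
      · exact hef
      · exact tr _ _ _ h5 hef
    have hfT : f ∉ T := fun hfT => irr f (hxf f hfT)
    have hmem : insert f T ∈ F f := by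
      rw [hF]
      refine ⟨Finset.insert_subset hf h1, Finset.mem_insert_self _ _, ?_, ?_⟩
      · intro a ha b hb hab
        rw [Finset.mem_insert] at ha hb
        rcases ha with rfl | ha <;> rcases hb with rfl | hb
        · exact absurd rfl hab
        · exact Or.inr (hxf b hb)
        · exact Or.inl (hxf a ha)
        · exact h3 a ha b hb hab
      · intro x hx
        rw [Finset.mem_insert] at hx
        exact hx.imp id (hxf x)
    have := Finset.le_sup (f := Finset.card) hmem
    rw [Finset.card_insert_of_notMem hfT] at this
    show (F e).sup Finset.card < (F f).sup Finset.card
    omega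
  by_contra hcon
  push Not at hcon
  rcases S.eq_empty_or_nonempty with rfl | hne
  · have := hcon ∅ (by simp) (by simp)
    simp at this
  obtain ⟨e0, he0⟩ := hne
  have hkpos : 0 < k := (hpos e0 he0).trans (hle e0 he0)
  have hmaps : ∀ e ∈ S, h e ∈ Finset.Icc 1 k := fun e he =>
    Finset.mem_Icc.2 ⟨hpos e he, hle e he⟩
  have hsum := Finset.card_eq_sum_card_fiberwise hmaps
  obtain ⟨c, hc, hmax⟩ := Finset.exists_max_image (Finset.Icc 1 k)
    (fun c => (S.filter (fun e => h e = c)).card) ⟨1, by simp; omega⟩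
  have h1 := hcon (S.filter (fun e => h e = c)) (Finset.filter_subset _ _) (by
    intro a ha b hb hab
    rw [Finset.mem_filter] at ha hb
    have := hmono a ha.1 b hb.1 hab
    omega)
  have h2 : S.card ≤ k * (S.filter (fun e => h e = c)).card := by
    calc S.card = _ := hsum
      _ ≤ _ := Finset.sum_le_card_nsmul _ _ _ hmax
      _ = _ := by simp
  omega

theorem mirsky_multi {α ι : Type*} [DecidableEq α] [DecidableEq ι] (I : Finset ι)
    (lt : ι → α → α → Prop)
    (irr : ∀ X a, ¬ lt X a a) (tr : ∀ X a b c, lt X a b → lt X b c → lt X a c) (k : ℕ)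
    (S : Finset α)
    (hk : ∀ X ∈ I, ∀ T ⊆ S, (∀ a ∈ T, ∀ b ∈ T, a ≠ b → lt X a b ∨ lt X b a) → T.card ≤ k) :
    ∃ T ⊆ S, (∀ X ∈ I, ∀ a ∈ T, ∀ b ∈ T, ¬ lt X a b) ∧ S.card ≤ k ^ I.card * T.card := by
  induction I using Finset.induction_on with
  | empty => exact ⟨S, subset_rfl, by simp, by simp⟩
  | insert X I hX ih =>
    obtain ⟨T, hT, hanti, hcard⟩ := ih (fun Y hY => hk Y (Finset.mem_insert_of_mem hY))
    obtain ⟨U, hU, hanti', hcard'⟩ := mirsky T (lt X) (irr X) (tr X) k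
      (fun V hV => hk X (Finset.mem_insert_self _ _) V (hV.trans hT))
    refine ⟨U, hU.trans hT, ?_, ?_⟩
    · intro Y hY a ha b hb
      rcases Finset.mem_insert.1 hY with rfl | hY
      · exact hanti' a ha b hb
      · exact hanti Y hY a (hU ha) b (hU hb)
    · rw [Finset.card_insert_of_notMem hX, pow_succ, mul_assoc]
      exact hcard.trans (Nat.mul_le_mul_left _ hcard')


/-- All pairs in `T` have the same relative position, encoded by `R`. -/
def RClique {α : Type*} (r : ℕ) (v : α → ℕ → ℕ) (R : ℕ → ℕ → Prop) (T : Finset α) : Prop :=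
  ∀ e ∈ T, ∀ f ∈ T, v e 0 < v f 0 → ∀ i < r, ∀ j < r, (v e i < v f j ↔ R i j)

/-- start of the block containing `i` -/
def bst (D : Finset ℕ) (i : ℕ) : ℕ := (D.filter (· ≤ i)).sup id

theorem bst_le (D : Finset ℕ) (i : ℕ) : bst D i ≤ i := by
  apply Finset.sup_le
  intro b hb
  exact (Finset.mem_filter.1 hb).2

theorem le_bst {D : Finset ℕ} {i d : ℕ} (hd : d ∈ D) (h : d ≤ i) : d ≤ bst D i :=
  Finset.le_sup (f := id) (Finset.mem_filter.2 ⟨hd, h⟩)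

theorem bst_mem (D : Finset ℕ) (i : ℕ) : bst D i = 0 ∨ bst D i ∈ D := by
  rcases (D.filter (· ≤ i)).eq_empty_or_nonempty with h | h
  · left
    simp [bst, h]
  · right
    obtain ⟨b, hb, hb'⟩ := Finset.exists_mem_eq_sup _ h id
    unfold bst
    rw [hb']
    exact (Finset.mem_filter.1 hb).1

theorem bst_mono (D : Finset ℕ) {i j : ℕ} (h : i ≤ j) : bst D i ≤ bst D j := by
  apply Finset.sup_mono
  intro x hx
  rw [Finset.mem_filter] at hx ⊢
  exact ⟨hx.1, hx.2.trans h⟩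

theorem bst_idem (D : Finset ℕ) (i : ℕ) : bst D (bst D i) = bst D i := by
  apply le_antisymm (bst_le _ _)
  rcases bst_mem D i with h | h
  · rw [h]; exact Nat.zero_le _
  · exact le_bst h le_rfl

/-- signed block order -/
def sOrd {α : Type*} (r : ℕ) (v : α → ℕ → ℕ) (D : Finset ℕ) (X : Finset ℕ) (e f : α) : Prop :=
  v e 0 < v f 0 ∧ ∀ i < r, ∀ j < r, bst D i = bst D j →
    (bst D i ∈ X → v f i < v e j) ∧ (bst D i ∉ X → v e i < v f j)

theorem exists_gap {α : Type*} (r : ℕ) (v : α → ℕ → ℕ) (D : Finset ℕ) (e f : α) (i : ℕ)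
    (hi : i < r) (h1 : v e (bst D i) < v f (bst D i)) (h2 : v f (bst D i) < v e i)
    (hne : ∀ g < r, v e g ≠ v f (bst D i)) :
    ∃ g ∈ Finset.Ioo 0 r \ D, v e (g - 1) < v f (bst D g) ∧ v f (bst D g) < v e g := by
  classical
  set a := bst D i with ha
  have hex : ∃ g, a ≤ g ∧ v f a < v e g := ⟨i, bst_le _ _, h2⟩
  obtain ⟨hg1, hg2⟩ := Nat.find_spec hex
  have hgi : Nat.find hex ≤ i := Nat.find_min' hex ⟨bst_le _ _, h2⟩
  have hmin : ∀ m < Nat.find hex, ¬ (a ≤ m ∧ v f a < v e m) := fun m hm => Nat.find_min hex hm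
  set g := Nat.find hex
  have hga : a < g := by
    rcases hg1.lt_or_eq with h | h
    · exact h
    · rw [← h] at hg2; omega
  have hbg : bst D g = a := by
    apply le_antisymm
    · exact bst_mono D hgi
    · rw [ha, ← bst_idem]; exact bst_mono D hg1
  refine ⟨g, ?_, ?_, ?_⟩
  · rw [Finset.mem_sdiff, Finset.mem_Ioo]
    refine ⟨⟨by omega, by omega⟩, fun hgD => ?_⟩
    have := le_bst hgD le_rfl
    omega
  · rw [hbg]
    have h3 := hmin (g - 1) (by omega)
    have h4 := hne (g - 1) (by omega)
    have h5 : a ≤ g - 1 := by omega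
    have h6 : ¬ v f a < v e (g - 1) := fun h => h3 ⟨h5, h⟩
    omega
  · rw [hbg]; exact hg2

theorem sOrd_clique {α : Type*} (r : ℕ) (v : α → ℕ → ℕ) (D X : Finset ℕ) (T : Finset α)
    (hv : ∀ e ∈ T, ∀ i j, i < j → j < r → v e i < v e j)
    (hcut : ∀ d ∈ D, ∀ e ∈ T, ∀ f ∈ T, v e (d - 1) < v f d)
    (hT : ∀ a ∈ T, ∀ b ∈ T, a ≠ b → sOrd r v D X a b ∨ sOrd r v D X b a) :
    RClique r v (fun i j => if bst D i = bst D j then bst D i ∉ X else i < j) T := by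
  intro e he f hf hef i hi j hj
  have hne : e ≠ f := by rintro rfl; omega
  have hs : sOrd r v D X e f := by
    rcases hT e he f hf hne with h | h
    · exact h
    · have := h.1; omega
  have key : ∀ e ∈ T, ∀ f ∈ T, ∀ i < r, ∀ j < r, bst D i < bst D j → v e i < v f j := by
    intro e he f hf i hi j hj hij
    have hmem : bst D j ∈ D := by
      rcases bst_mem D j with h | h
      · omega
      · exact h
    have h1 : i < bst D j := by
      by_contra hcon
      have := le_bst hmem (not_lt.1 hcon)
      omega
    have h2 := hcut _ hmem e he f hf
    have h3 : v e i ≤ v e (bst D j - 1) := by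
      rcases (show i ≤ bst D j - 1 by omega).lt_or_eq with h | h
      · have h5 := bst_le D j
        exact (hv e he _ _ h (by omega)).le
      · rw [h]
    have h4 : v f (bst D j) ≤ v f j := by
      rcases (bst_le D j).lt_or_eq with h | h
      · exact (hv f hf _ _ h hj).le
      · rw [h]
    omega
  have h1 := hs.2 i hi j hj
  by_cases hb : bst D i = bst D j
  · simp only [hb, if_true]
    constructor
    · intro hlt hX
      have := (hs.2 j hj i hi hb.symm).1 hX
      omega
    · intro hX
      exact (h1 hb).2 (by rw [hb]; exact hX)
  · simp only [hb, if_false]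
    rcases Nat.lt_or_gt_of_ne hb with h | h
    · have h2 := key e he f hf i hi j hj h
      have h3 : i < j := by
        by_contra hcon
        have := bst_mono D (not_lt.1 hcon)
        omega
      simp [h2, h3]
    · have h2 := key f hf e he j hj i hi h
      have h3 : j < i := by
        by_contra hcon
        have := bst_mono D (not_lt.1 hcon)
        omega
      constructor <;> intro <;> omega

theorem ramsey_step {α : Type*} [DecidableEq α] (r : ℕ) (v : α → ℕ → ℕ) (k : ℕ)
    (S : Finset α) (D : Finset ℕ)
    (hv : ∀ e ∈ S, ∀ i j, i < j → j < r → v e i < v e j)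
    (hne : ∀ e ∈ S, ∀ f ∈ S, e ≠ f → ∀ i < r, ∀ j < r, v e i ≠ v f j)
    (hr : 0 < r)
    (hcut : ∀ d ∈ D, ∀ e ∈ S, ∀ f ∈ S, v e (d - 1) < v f d)
    (hk : ∀ R, ∀ T ⊆ S, RClique r v R T → T.card ≤ k) :
    ∃ T ⊆ S, S.card ≤ k ^ (2 ^ D.card) * T.card ∧
      ∀ e ∈ T, ∀ f ∈ T, e ≠ f → ∃ g ∈ Finset.Ioo 0 r \ D,
        (v e (g - 1) < v f (bst D g) ∧ v f (bst D g) < v e g) ∨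
        (v f (g - 1) < v e (bst D g) ∧ v e (bst D g) < v f g) := by
  classical
  obtain ⟨T, hTS, hanti, hcard⟩ := mirsky_multi D.powerset (fun X => sOrd r v D X)
    (fun X a h => by have := h.1; omega)
    (fun X a b c hab hbc => by
      refine ⟨hab.1.trans hbc.1, fun i hi j hj hij => ⟨fun hX => ?_, fun hX => ?_⟩⟩
      · exact ((hbc.2 i hi j hj hij).1 hX).trans ((hab.2 j hj j hj rfl).1 (hij ▸ hX))
      · exact ((hab.2 i hi j hj hij).2 hX).trans ((hbc.2 j hj j hj rfl).2 (hij ▸ hX)))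
    k S (fun X _ T hT hch => hk _ T hT (sOrd_clique r v D X T
      (fun e he => hv e (hT he)) (fun d hd e he f hf => hcut d hd e (hT he) f (hT hf)) hch))
  refine ⟨T, hTS, by rwa [Finset.card_powerset] at hcard, ?_⟩
  -- main claim for oriented pairs
  have key : ∀ e ∈ T, ∀ f ∈ T, e ≠ f → v e 0 < v f 0 → ∃ g ∈ Finset.Ioo 0 r \ D,
        (v e (g - 1) < v f (bst D g) ∧ v f (bst D g) < v e g) ∨
        (v f (g - 1) < v e (bst D g) ∧ v e (bst D g) < v f g) := by
    intro e he f hf hef h0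
    have hno := hanti (D.filter (fun a => v f a < v e a)) (by simp) e he f hf
    have hbr : ∀ i < r, bst D i < r := fun i hi => (bst_le D i).trans_lt hi
    have hmono : ∀ x ∈ T, ∀ i < r, v x (bst D i) ≤ v x i := by
      intro x hx i hi
      rcases (bst_le D i).lt_or_eq with h | h
      · exact (hv x (hTS hx) _ _ h hi).le
      · rw [h]
    unfold sOrd at hno
    push Not at hno
    obtain ⟨i, hi, j, hj, hij, hor⟩ := hno h0
    by_cases hX : bst D i ∈ D.filter (fun a => v f a < v e a)
    · have h1 : v e j ≤ v f i := by
        by_contra hcon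
        exact hX |> fun hX => (hor (fun _ => not_le.1 hcon)).1 hX
      have hX' := (Finset.mem_filter.1 hX).2
      have h2 := hmono e he j hj
      have h3 := hne e (hTS he) f (hTS hf) hef (bst D i) (hbr i hi) i hi
      rw [← hij] at h2
      obtain ⟨g, hg, hg'⟩ := exists_gap r v D f e i hi hX' (by omega)
        (fun g hg => hne f (hTS hf) e (hTS he) hef.symm g hg _ (hbr i hi))
      exact ⟨g, hg, Or.inr hg'⟩
    · have h1 : v f j ≤ v e i := (hor (fun h => absurd h hX)).2
      have hX' : v e (bst D i) < v f (bst D i) := by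
        have h3 := hne e (hTS he) f (hTS hf) hef (bst D i) (hbr i hi) _ (hbr i hi)
        rcases bst_mem D i with h | h
        · rw [h]; exact h0
        · rw [Finset.mem_filter] at hX
          have : ¬ v f (bst D i) < v e (bst D i) := fun h' => hX ⟨h, h'⟩
          omega
      have h2 := hmono f hf j hj
      have h3 := hne e (hTS he) f (hTS hf) hef i hi (bst D i) (hbr i hi)
      rw [← hij] at h2
      obtain ⟨g, hg, hg'⟩ := exists_gap r v D e f i hi hX' (by omega)
        (fun g hg => hne e (hTS he) f (hTS hf) hef g hg _ (hbr i hi))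
      exact ⟨g, hg, Or.inl hg'⟩
  intro e he f hf hef
  rcases Nat.lt_or_gt_of_ne (hne e (hTS he) f (hTS hf) hef 0 hr 0 hr) with h | h
  · exact key e he f hf hef h
  · obtain ⟨g, hg, hg'⟩ := key f hf e he hef.symm h
    exact ⟨g, hg, hg'.symm⟩

theorem ramsey {α : Type*} [DecidableEq α] (r : ℕ) (v : α → ℕ → ℕ) (k : ℕ) (hk1 : 1 ≤ k)
    (m : ℕ) : ∀ (S : Finset α) (D : Finset ℕ) (E : ℕ), D ⊆ Finset.Ioo 0 r →
    D.card + m + 1 = r → E + 2 ^ D.card = 2 ^ r →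
    (∀ e ∈ S, ∀ i j, i < j → j < r → v e i < v e j) →
    (∀ e ∈ S, ∀ f ∈ S, e ≠ f → ∀ i < r, ∀ j < r, v e i ≠ v f j) →
    (∀ d ∈ D, ∀ e ∈ S, ∀ f ∈ S, v e (d - 1) < v f d) →
    (∀ R, ∀ T ⊆ S, RClique r v R T → T.card ≤ k) →
    S.card ≤ 4 ^ m * m.factorial * k ^ E := by
  classical
  induction m with
  | zero =>
    intro S D E hD hm hE hv hne hcut hk
    obtain ⟨T, hTS, hcard, hpair⟩ := ramsey_step r v k S D hv hne (by omega) hcut hk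
    have hDG : Finset.Ioo 0 r \ D = ∅ := by
      rw [← Finset.card_eq_zero, Finset.card_sdiff_of_subset hD, Nat.card_Ioo]
      omega
    have hT1 : T.card ≤ 1 := by
      rw [Finset.card_le_one]
      intro a ha b hb
      by_contra hab
      obtain ⟨g, hg, -⟩ := hpair a ha b hb hab
      rw [hDG] at hg
      simp at hg
    have hE' : E = 2 ^ D.card := by
      have : 2 ^ r = 2 ^ D.card * 2 := by rw [← pow_succ]; congr 1; omega
      omega
    rw [hE']
    simp only [pow_zero, Nat.factorial_zero, one_mul]
    calc S.card ≤ _ := hcard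
      _ ≤ k ^ 2 ^ D.card * 1 := Nat.mul_le_mul_left _ hT1
      _ = _ := by ring
  | succ m ih =>
    intro S D E hD hm hE hv hne hcut hk
    obtain ⟨T, hTS, hcard, hpair⟩ := ramsey_step r v k S D hv hne (by omega) hcut hk
    have hDG : (Finset.Ioo 0 r \ D).card = m + 1 := by
      rw [Finset.card_sdiff_of_subset hD, Nat.card_Ioo]
      omega
    have hle : 2 ^ (D.card + 1) ≤ 2 ^ r := Nat.pow_le_pow_right (by norm_num) (by omega)
    obtain ⟨E', hE'⟩ : ∃ E', E' + 2 ^ (D.card + 1) = 2 ^ r := ⟨_, Nat.sub_add_cancel hle⟩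
    have hEE : E = 2 ^ D.card + E' := by
      rw [pow_succ] at hE'
      omega
    set B := 4 ^ m * m.factorial * k ^ E' with hB
    have hBpos : 1 ≤ B := by
      have : 0 < B := by positivity
      exact this
    let H : α → ℕ → Finset α := fun e g =>
      T.filter (fun f => v f (g - 1) < v e (bst D g) ∧ v e (bst D g) < v f g)
    have hH : ∀ e g, g ∈ Finset.Ioo 0 r \ D → (H e g).card ≤ B := by
      intro e g hg
      rw [Finset.mem_sdiff] at hg
      have hsub : H e g ⊆ S := (Finset.filter_subset _ _).trans hTS
      apply ih (H e g) (insert g D) E'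
      · exact Finset.insert_subset hg.1 hD
      · rw [Finset.card_insert_of_notMem hg.2]; omega
      · rw [Finset.card_insert_of_notMem hg.2]; exact hE'
      · exact fun e he => hv e (hsub he)
      · exact fun e he f hf => hne e (hsub he) f (hsub hf)
      · intro d hd a ha b hb
        rcases Finset.mem_insert.1 hd with rfl | hd
        · exact (Finset.mem_filter.1 ha).2.1.trans (Finset.mem_filter.1 hb).2.2
        · exact hcut d hd a (hsub ha) b (hsub hb)
      · exact fun R U hU => hk R U (hU.trans hsub)
    have hcov : T.offDiag ⊆ T.biUnion (fun e => (Finset.Ioo 0 r \ D).biUnion (fun g =>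
        ({e} ×ˢ H e g) ∪ (H e g ×ˢ {e}))) := by
      rintro ⟨e, f⟩ hef
      rw [Finset.mem_offDiag] at hef
      obtain ⟨he, hf, hef⟩ := hef
      obtain ⟨g, hg, h⟩ := hpair e he f hf hef
      simp only [Finset.mem_biUnion, Finset.mem_union, Finset.mem_product, Finset.mem_singleton]
      rcases h with h | h
      · exact ⟨f, hf, g, hg, Or.inr ⟨Finset.mem_filter.2 ⟨he, h⟩, rfl⟩⟩
      · exact ⟨e, he, g, hg, Or.inl ⟨rfl, Finset.mem_filter.2 ⟨hf, h⟩⟩⟩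
    have hc1 : T.offDiag.card ≤ T.card * ((m + 1) * (2 * B)) := by
      refine (Finset.card_le_card hcov).trans ?_
      apply Finset.card_biUnion_le_card_mul
      intro e he
      rw [← hDG]
      apply Finset.card_biUnion_le_card_mul
      intro g hg
      refine (Finset.card_union_le _ _).trans ?_
      rw [Finset.card_product, Finset.card_product, Finset.card_singleton]
      have := hH e g hg
      omega
    rw [Finset.offDiag_card] at hc1
    have hc2 : T.card ≤ 4 * ((m + 1) * B) := by
      rcases Nat.eq_zero_or_pos T.card with h0 | hpos
      · omega
      · have h1 : T.card * T.card ≤ T.card * ((m + 1) * (2 * B) + 1) := by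
          rw [mul_add]; omega
        have h2 := Nat.le_of_mul_le_mul_left h1 hpos
        have h3 : 1 ≤ (m + 1) * B := Nat.mul_pos (by omega) hBpos
        have h4 : (m + 1) * (2 * B) = 2 * ((m + 1) * B) := by ring
        omega
    calc S.card ≤ _ := hcard
      _ ≤ k ^ 2 ^ D.card * (4 * ((m + 1) * B)) := Nat.mul_le_mul_left _ hc2
      _ = _ := by
        rw [hEE, pow_add, pow_succ, Nat.factorial_succ, hB]; ring

theorem const_bound (r : ℕ) : 4 ^ r * r.factorial ≤ 2 ^ (2 ^ (r + 1) - 1) := by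
  induction r with
  | zero => norm_num
  | succ r ih =>
    have h1 : r + 1 < 2 ^ (r + 1) := Nat.lt_two_pow_self
    have h2 : r + 1 ≤ 2 ^ r := Nat.lt_two_pow_self
    have h3 : 2 ^ (r + 1 + 1) - 1 = (2 ^ (r + 1) - 1) + 2 ^ (r + 1) := by
      rw [pow_succ 2 (r + 1)]; omega
    have h4 : 4 * (r + 1) ≤ 2 ^ (2 ^ (r + 1)) := by
      calc 4 * (r + 1) ≤ 4 * 2 ^ r := by omega
        _ = 2 ^ (r + 2) := by ring
        _ ≤ _ := Nat.pow_le_pow_right (by norm_num) (by omega)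
    rw [h3, pow_add 2]
    calc 4 ^ (r + 1) * (r + 1).factorial = (4 ^ r * r.factorial) * (4 * (r + 1)) := by
          rw [Nat.factorial_succ]; ring
      _ ≤ _ := Nat.mul_le_mul ih h4

theorem ramsey_final {α : Type*} [DecidableEq α] (r : ℕ) (hr : 1 ≤ r) (v : α → ℕ → ℕ) (k : ℕ)
    (hk1 : 1 ≤ k) (S : Finset α)
    (hv : ∀ e ∈ S, ∀ i j, i < j → j < r → v e i < v e j)
    (hne : ∀ e ∈ S, ∀ f ∈ S, e ≠ f → ∀ i < r, ∀ j < r, v e i ≠ v f j)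
    (hk : ∀ R, ∀ T ⊆ S, RClique r v R T → T.card ≤ k) :
    S.card ≤ (2 * k) ^ (2 ^ r - 1) := by
  obtain ⟨m, rfl⟩ : ∃ m, r = m + 1 := ⟨r - 1, by omega⟩
  have hp : 0 < 2 ^ (m + 1) := by positivity
  have := ramsey (m + 1) v k hk1 m S ∅ (2 ^ (m + 1) - 1) (by simp) (by simp)
    (by simp only [Finset.card_empty, pow_zero]; omega) hv hne (by simp) hk
  rw [mul_pow]
  exact this.trans (Nat.mul_le_mul_right _ (const_bound m))

theorem mem_mSupport {M : Finset (Finset ℕ)} {x : ℕ} : x ∈ mSupport M ↔ ∃ e ∈ M, x ∈ e := by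
  simp [mSupport, Finset.mem_sup]

theorem IsMatching.mono {r : ℕ} {M N : Finset (Finset ℕ)} (h : IsMatching r M) (hN : N ⊆ M) :
    IsMatching r N :=
  ⟨fun e he => h.1 e (hN he), fun e he f hf => h.2 e (hN he) f (hN hf)⟩

theorem IsMatching.vtx_lt {r : ℕ} {M : Finset (Finset ℕ)} (h : IsMatching r M) :
    ∀ e ∈ M, ∀ i j, i < j → j < r → vtx e i < vtx e j := by
  intro e he i j hij hj
  exact _root_.vtx_lt hij (by rw [h.1 e he]; exact hj)

theorem IsMatching.vtx_ne {r : ℕ} {M : Finset (Finset ℕ)} (h : IsMatching r M) :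
    ∀ e ∈ M, ∀ f ∈ M, e ≠ f → ∀ i < r, ∀ j < r, vtx e i ≠ vtx f j := by
  intro e he f hf hef i hi j hj heq
  have h1 : vtx e i ∈ e := vtx_mem (by rw [h.1 e he]; exact hi)
  have h2 : vtx f j ∈ f := vtx_mem (by rw [h.1 f hf]; exact hj)
  rw [heq] at h1
  exact Finset.disjoint_left.1 (h.2 e he f hf hef) h1 h2

/-- every edge is the image of its vertex enumeration -/
theorem mem_edge_iff {r : ℕ} {e : Finset ℕ} (he : e.card = r) {x : ℕ} :
    x ∈ e ↔ ∃ i < r, vtx e i = x := by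
  constructor
  · intro hx
    obtain ⟨i, hi, h⟩ := vtx_surj hx
    exact ⟨i, he ▸ hi, h⟩
  · rintro ⟨i, hi, rfl⟩
    exact vtx_mem (he ▸ hi)

theorem enum_edges {r : ℕ} (hr : 0 < r) {T : Finset (Finset ℕ)} (h : IsMatching r T) {m : ℕ}
    (hm : T.card = m) : ∃ a : Fin m → Finset ℕ, (∀ s t, s < t → vtx (a s) 0 < vtx (a t) 0) ∧
      ∀ e, e ∈ T ↔ ∃ t, a t = e := by
  classical
  have hinj : Set.InjOn (fun e => vtx e 0) (T : Set (Finset ℕ)) := by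
    intro e he f hf hef
    by_contra hne
    exact h.vtx_ne e he f hf hne 0 hr 0 hr hef
  have hcard : (T.image (fun e => vtx e 0)).card = m := by
    rw [Finset.card_image_of_injOn hinj, hm]
  have hmem : ∀ t : Fin m, ∃ e ∈ T,
      vtx e 0 = (T.image (fun e => vtx e 0)).orderEmbOfFin hcard t := by
    intro t
    have := Finset.orderEmbOfFin_mem (T.image (fun e => vtx e 0)) hcard t
    rw [Finset.mem_image] at this
    exact this
  choose a ha hav using hmem
  refine ⟨a, ?_, ?_⟩
  · intro s t hst
    rw [hav, hav]
    exact (Finset.orderEmbOfFin _ hcard).strictMono hst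
  · intro e
    constructor
    · intro he
      have h1 : vtx e 0 ∈ Set.range ((T.image (fun e => vtx e 0)).orderEmbOfFin hcard) := by
        rw [Finset.range_orderEmbOfFin]
        exact Finset.mem_coe.2 (Finset.mem_image_of_mem (fun e => vtx e 0) he)
      obtain ⟨t, ht⟩ := h1
      exact ⟨t, hinj (ha t) he (by simp only; rw [hav, ht])⟩
    · rintro ⟨t, rfl⟩
      exact ha t

theorem rclique_iso {r : ℕ} (hr : 0 < r) {T₁ T₂ : Finset (Finset ℕ)} (h₁ : IsMatching r T₁)
    (h₂ : IsMatching r T₂) (hc : T₁.card = T₂.card) {R : ℕ → ℕ → Prop}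
    (hR₁ : RClique r vtx R T₁) (hR₂ : RClique r vtx R T₂) : MatchIso T₁ T₂ := by
  classical
  obtain ⟨a, ha, haT⟩ := enum_edges hr h₁ rfl
  obtain ⟨b, hb, hbT⟩ := enum_edges hr h₂ hc.symm
  have haM : ∀ t, a t ∈ T₁ := fun t => (haT _).2 ⟨t, rfl⟩
  have hbM : ∀ t, b t ∈ T₂ := fun t => (hbT _).2 ⟨t, rfl⟩
  have hane : ∀ s t, s ≠ t → a s ≠ a t := by
    intro s t hst heq
    rcases lt_or_gt_of_ne hst with h | h
    · have := ha _ _ h; rw [heq] at this; omega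
    · have := ha _ _ h; rw [heq] at this; omega
  have hbne : ∀ s t, s ≠ t → b s ≠ b t := by
    intro s t hst heq
    rcases lt_or_gt_of_ne hst with h | h
    · have := hb _ _ h; rw [heq] at this; omega
    · have := hb _ _ h; rw [heq] at this; omega
  have hord : ∀ s t, ∀ i < r, ∀ j < r, vtx (a s) i < vtx (a t) j → vtx (b s) i < vtx (b t) j := by
    intro s t i hi j hj hlt
    rcases lt_trichotomy s t with h | h | h
    · rw [hR₂ _ (hbM s) _ (hbM t) (hb _ _ h) i hi j hj]
      rwa [hR₁ _ (haM s) _ (haM t) (ha _ _ h) i hi j hj] at hlt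
    · subst h
      have : i < j := by
        by_contra hcon
        rcases (not_lt.1 hcon).lt_or_eq with h | h
        · have := h₁.vtx_lt _ (haM s) _ _ h hi
          omega
        · subst h; omega
      exact h₂.vtx_lt _ (hbM s) _ _ this hj
    · have h3 := hR₁ _ (haM t) _ (haM s) (ha _ _ h) j hj i hi
      have h4 := hR₂ _ (hbM t) _ (hbM s) (hb _ _ h) j hj i hi
      have h5 := h₂.vtx_ne _ (hbM t) _ (hbM s) (hbne _ _ h.ne) j hj i hi
      have h6 : ¬ vtx (b t) j < vtx (b s) i := by
        rw [h4, ← h3]; omega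
      omega
  have huniq : ∀ s t, ∀ i < r, ∀ j < r, vtx (a s) i = vtx (a t) j → s = t ∧ i = j := by
    intro s t i hi j hj heq
    have hst : s = t := by
      by_contra hst
      exact h₁.vtx_ne _ (haM s) _ (haM t) (hane _ _ hst) i hi j hj heq
    subst hst
    refine ⟨rfl, ?_⟩
    rcases lt_trichotomy i j with h | h | h
    · have := h₁.vtx_lt _ (haM s) _ _ h hj; omega
    · exact h
    · have := h₁.vtx_lt _ (haM s) _ _ h hi; omega
  let φ : ℕ → ℕ := fun x =>
    if h : ∃ p : Fin T₁.card × ℕ, p.2 < r ∧ vtx (a p.1) p.2 = x then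
      vtx (b h.choose.1) h.choose.2 else 0
  have hφ : ∀ t, ∀ i < r, φ (vtx (a t) i) = vtx (b t) i := by
    intro t i hi
    have hex : ∃ p : Fin T₁.card × ℕ, p.2 < r ∧ vtx (a p.1) p.2 = vtx (a t) i := ⟨(t, i), hi, rfl⟩
    simp only [φ]
    rw [dif_pos hex]
    have hs := hex.choose_spec
    obtain ⟨h1, h2⟩ := huniq _ _ _ hs.1 _ hi hs.2
    rw [h1, h2]
  have hs₁ : ∀ x, x ∈ mSupport T₁ ↔ ∃ t, ∃ i < r, vtx (a t) i = x := by
    intro x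
    rw [mem_mSupport]
    constructor
    · rintro ⟨e, he, hx⟩
      obtain ⟨t, rfl⟩ := (haT e).1 he
      exact ⟨t, (mem_edge_iff (h₁.1 _ he)).1 hx⟩
    · rintro ⟨t, hx⟩
      exact ⟨a t, haM t, (mem_edge_iff (h₁.1 _ (haM t))).2 hx⟩
  have hs₂ : ∀ x, x ∈ mSupport T₂ ↔ ∃ t, ∃ i < r, vtx (b t) i = x := by
    intro x
    rw [mem_mSupport]
    constructor
    · rintro ⟨e, he, hx⟩
      obtain ⟨t, rfl⟩ := (hbT e).1 he
      exact ⟨t, (mem_edge_iff (h₂.1 _ he)).1 hx⟩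
    · rintro ⟨t, hx⟩
      exact ⟨b t, hbM t, (mem_edge_iff (h₂.1 _ (hbM t))).2 hx⟩
  have hmono : ∀ x ∈ mSupport T₁, ∀ y ∈ mSupport T₁, x < y → φ x < φ y := by
    intro x hx y hy hxy
    obtain ⟨s, i, hi, rfl⟩ := (hs₁ x).1 hx
    obtain ⟨t, j, hj, rfl⟩ := (hs₁ y).1 hy
    rw [hφ s i hi, hφ t j hj]
    exact hord s t i hi j hj hxy
  have himg : ∀ t, (a t).image φ = b t := by
    intro t
    ext x
    rw [Finset.mem_image, mem_edge_iff (h₂.1 _ (hbM t))]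
    constructor
    · rintro ⟨y, hy, rfl⟩
      obtain ⟨i, hi, rfl⟩ := (mem_edge_iff (h₁.1 _ (haM t))).1 hy
      exact ⟨i, hi, (hφ t i hi).symm⟩
    · rintro ⟨i, hi, rfl⟩
      exact ⟨_, (mem_edge_iff (h₁.1 _ (haM t))).2 ⟨i, hi, rfl⟩, hφ t i hi⟩
  refine ⟨φ, ⟨?_, ?_, ?_⟩, hmono, ?_⟩
  · intro x hx
    obtain ⟨s, i, hi, rfl⟩ := (hs₁ x).1 hx
    rw [hφ s i hi]
    exact (hs₂ _).2 ⟨s, i, hi, rfl⟩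
  · intro x hx y hy hxy
    rcases lt_trichotomy x y with h | h | h
    · have := hmono x hx y hy h; omega
    · exact h
    · have := hmono y hy x hx h; omega
  · intro x hx
    obtain ⟨s, i, hi, rfl⟩ := (hs₂ x).1 hx
    exact ⟨vtx (a s) i, (hs₁ _).2 ⟨s, i, hi, rfl⟩, hφ s i hi⟩
  · ext e
    rw [Finset.mem_image, hbT]
    constructor
    · rintro ⟨t, rfl⟩
      exact ⟨a t, haM t, himg t⟩
    · rintro ⟨e', he', rfl⟩
      obtain ⟨t, rfl⟩ := (haT e').1 he'
      exact ⟨t, (himg t).symm⟩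

theorem MatchIso.trans {A B C : Finset (Finset ℕ)} (h₁ : MatchIso A B) (h₂ : MatchIso B C) :
    MatchIso A C := by
  obtain ⟨f, hf, hfm, hfi⟩ := h₁
  obtain ⟨g, hg, hgm, hgi⟩ := h₂
  refine ⟨g ∘ f, hg.comp hf, ?_, ?_⟩
  · intro x hx y hy hxy
    exact hgm _ (hf.mapsTo hx) _ (hf.mapsTo hy) (hfm x hx y hy hxy)
  · rw [hgi, hfi, Finset.image_image]
    congr 1
    funext e
    simp [Finset.image_image]

theorem compress {r n : ℕ} {Q : Finset (Finset ℕ)} (hQ : IsMatching r Q) (hn : Q.card = n) :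
    ∃ P, IsOrderedMatching r n P ∧ MatchIso Q P := by
  classical
  set S := mSupport Q with hS
  have hScard : S.card = r * n := by
    have h1 : S = Q.biUnion id := by
      rw [hS, mSupport, Finset.sup_eq_biUnion]
    rw [h1, Finset.card_biUnion (t := id) (fun e he f hf hef => hQ.2 e he f hf hef)]
    rw [Finset.sum_congr rfl (fun e he => show (id e).card = r from hQ.1 e he)]
    simp [hn, mul_comm]
  let c : ℕ → ℕ := fun x => (S.filter (· ≤ x)).card
  have hmono : ∀ x ∈ S, ∀ y ∈ S, x < y → c x < c y := by
    intro x hx y hy hxy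
    apply Finset.card_lt_card
    rw [Finset.ssubset_iff_of_subset]
    · exact ⟨y, by simp [hy], by simp; intro; omega⟩
    · intro z hz
      rw [Finset.mem_filter] at hz ⊢
      exact ⟨hz.1, by omega⟩
  have hinj : Set.InjOn c (S : Set ℕ) := by
    intro x hx y hy hxy
    rcases lt_trichotomy x y with h | h | h
    · have := hmono x hx y hy h; omega
    · exact h
    · have := hmono y hy x hx h; omega
  have himgS : S.image c = Finset.Icc 1 (r * n) := by
    apply Finset.eq_of_subset_of_card_le
    · intro y hy
      obtain ⟨x, hx, rfl⟩ := Finset.mem_image.1 hy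
      rw [Finset.mem_Icc]
      constructor
      · exact Finset.card_pos.2 ⟨x, by simp [hx]⟩
      · rw [← hScard]
        exact Finset.card_le_card (Finset.filter_subset _ _)
    · rw [Finset.card_image_of_injOn hinj, hScard, Nat.card_Icc]
      omega
  have hsub : ∀ e ∈ Q, e ⊆ S := fun e he x hx => mem_mSupport.2 ⟨e, he, hx⟩
  have hdisj : ∀ e ∈ Q, ∀ f ∈ Q, e ≠ f → Disjoint (e.image c) (f.image c) := by
    intro e he f hf hef
    rw [Finset.disjoint_left]
    intro x hx hx'
    obtain ⟨y, hy, rfl⟩ := Finset.mem_image.1 hx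
    obtain ⟨z, hz, hzy⟩ := Finset.mem_image.1 hx'
    have := hinj (hsub f hf hz) (hsub e he hy) hzy
    subst this
    exact Finset.disjoint_left.1 (hQ.2 e he f hf hef) hy hz
  have hsup : mSupport (Q.image fun e => e.image c) = S.image c := by
    ext x
    rw [mem_mSupport, Finset.mem_image]
    constructor
    · rintro ⟨e', he', hx⟩
      obtain ⟨e, he, rfl⟩ := Finset.mem_image.1 he'
      obtain ⟨y, hy, rfl⟩ := Finset.mem_image.1 hx
      exact ⟨y, hsub e he hy, rfl⟩
    · rintro ⟨y, hy, rfl⟩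
      obtain ⟨e, he, hye⟩ := mem_mSupport.1 hy
      exact ⟨e.image c, Finset.mem_image_of_mem _ he, Finset.mem_image_of_mem _ hye⟩
  refine ⟨Q.image fun e => e.image c, ⟨⟨?_, ?_⟩, ?_, ?_⟩, c, ⟨?_, hinj, ?_⟩, hmono, rfl⟩
  · intro e' he'
    obtain ⟨e, he, rfl⟩ := Finset.mem_image.1 he'
    rw [Finset.card_image_of_injOn (hinj.mono (by exact_mod_cast hsub e he)), hQ.1 e he]
  · intro e' he' f' hf' hef
    obtain ⟨e, he, rfl⟩ := Finset.mem_image.1 he'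
    obtain ⟨f, hf, rfl⟩ := Finset.mem_image.1 hf'
    exact hdisj e he f hf (fun h => hef (by rw [h]))
  · rw [Finset.card_image_of_injOn, hn]
    intro e he f hf hef
    have := Finset.image_injOn_powerset_of_injOn hinj
    exact this (by simpa using hsub e he) (by simpa using hsub f hf) hef
  · rw [hsup, himgS]
  · rw [hsup]
    intro x hx
    exact_mod_cast Finset.mem_image_of_mem c hx
  · rw [hsup]
    intro x hx
    have hx' : x ∈ S.image c := hx
    obtain ⟨y, hy, rfl⟩ := Finset.mem_image.1 hx'
    exact ⟨y, hy, rfl⟩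

theorem exists_ordered (r n : ℕ) (hr : 0 < r) : ∃ M, IsOrderedMatching r n M := by
  classical
  let F : ℕ → Finset ℕ := fun i => Finset.Ico (r * i) (r * i + r)
  have hd : ∀ i j, i < j → Disjoint (F i) (F j) := by
    intro i j hij
    rw [Finset.disjoint_left]
    intro x hx hx'
    simp only [F, Finset.mem_Ico] at hx hx'
    have : r * (i + 1) ≤ r * j := Nat.mul_le_mul_left _ hij
    rw [mul_add, mul_one] at this
    omega
  have hd' : ∀ i j, i ≠ j → Disjoint (F i) (F j) := by
    intro i j hij
    rcases Nat.lt_or_gt_of_ne hij with h | h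
    · exact hd i j h
    · exact (hd j i h).symm
  have hne : ∀ i, r * i ∈ F i := by
    intro i
    simp only [F, Finset.mem_Ico]
    omega
  have hinj : Function.Injective F := by
    intro i j hij
    by_contra h
    have h1 := hd' i j h
    have h2 := hne i
    exact Finset.disjoint_left.1 h1 h2 (hij ▸ h2)
  have hQ : IsMatching r ((Finset.range n).image F) := by
    constructor
    · intro e he
      obtain ⟨i, -, rfl⟩ := Finset.mem_image.1 he
      simp [F]
    · intro e he f hf hef
      obtain ⟨i, -, rfl⟩ := Finset.mem_image.1 he
      obtain ⟨j, -, rfl⟩ := Finset.mem_image.1 hf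
      exact hd' i j (fun h => hef (by rw [h]))
  obtain ⟨P, hP, -⟩ := compress hQ (n := n)
    (by rw [Finset.card_image_of_injective _ hinj, Finset.card_range])
  exact ⟨P, hP⟩

theorem pclique_rclique {r : ℕ} (hr : 0 < r) {P T : Finset (Finset ℕ)} (hT : IsMatching r T)
    (hP : IsPClique P T) : ∃ R, RClique r vtx R T := by
  classical
  have main : ∀ e ∈ T, ∀ f ∈ T, ∀ e' ∈ T, ∀ f' ∈ T, vtx e 0 < vtx f 0 → vtx e' 0 < vtx f' 0 →
      ∀ i < r, ∀ j < r, vtx e i < vtx f j → vtx e' i < vtx f' j := by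
    intro e he f hf e' he' f' hf' h0 h0' i hi j hj hlt
    obtain ⟨φ, -, hφ, hPφ⟩ := hP e he f hf (by rintro rfl; omega)
    obtain ⟨ψ, -, hψ, hPψ⟩ := hP e' he' f' hf' (by rintro rfl; omega)
    have hce := hT.1 e he
    have hcf := hT.1 f hf
    have hce' := hT.1 e' he'
    have hcf' := hT.1 f' hf'
    have me : ∀ x ∈ e, x ∈ mSupport {e, f} := fun x hx => mem_mSupport.2 ⟨e, by simp, hx⟩
    have mf : ∀ x ∈ f, x ∈ mSupport {e, f} := fun x hx => mem_mSupport.2 ⟨f, by simp, hx⟩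
    have me' : ∀ x ∈ e', x ∈ mSupport {e', f'} := fun x hx => mem_mSupport.2 ⟨e', by simp, hx⟩
    have mf' : ∀ x ∈ f', x ∈ mSupport {e', f'} := fun x hx => mem_mSupport.2 ⟨f', by simp, hx⟩
    have ve : ∀ i < r, vtx (e.image φ) i = φ (vtx e i) := fun i hi =>
      vtx_image (fun x hx y hy => hφ x (me x hx) y (me y hy)) (hce ▸ hi)
    have vf : ∀ i < r, vtx (f.image φ) i = φ (vtx f i) := fun i hi =>
      vtx_image (fun x hx y hy => hφ x (mf x hx) y (mf y hy)) (hcf ▸ hi)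
    have ve' : ∀ i < r, vtx (e'.image ψ) i = ψ (vtx e' i) := fun i hi =>
      vtx_image (fun x hx y hy => hψ x (me' x hx) y (me' y hy)) (hce' ▸ hi)
    have vf' : ∀ i < r, vtx (f'.image ψ) i = ψ (vtx f' i) := fun i hi =>
      vtx_image (fun x hx y hy => hψ x (mf' x hx) y (mf' y hy)) (hcf' ▸ hi)
    have ne : ∀ i < r, vtx e i ∈ mSupport {e, f} := fun i hi => me _ (vtx_mem (hce ▸ hi))
    have nf : ∀ i < r, vtx f i ∈ mSupport {e, f} := fun i hi => mf _ (vtx_mem (hcf ▸ hi))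
    have ne' : ∀ i < r, vtx e' i ∈ mSupport {e', f'} := fun i hi => me' _ (vtx_mem (hce' ▸ hi))
    have nf' : ∀ i < r, vtx f' i ∈ mSupport {e', f'} := fun i hi => mf' _ (vtx_mem (hcf' ▸ hi))
    have heq : ({e.image φ, f.image φ} : Set (Finset ℕ)) = {e'.image ψ, f'.image ψ} := by
      have h1 : ({e.image φ, f.image φ} : Finset (Finset ℕ)) = {e'.image ψ, f'.image ψ} := by
        have := hPφ.symm.trans hPψ
        simpa [Finset.image_insert, Finset.image_singleton] using this
      have := congrArg (fun s : Finset (Finset ℕ) => (s : Set (Finset ℕ))) h1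
      simpa using this
    have a1 := hφ _ (ne 0 hr) _ (nf 0 hr) h0
    have a2 := hψ _ (ne' 0 hr) _ (nf' 0 hr) h0'
    rcases Set.pair_eq_pair_iff.1 heq with ⟨h1, h2⟩ | ⟨h1, h2⟩
    · have a3 := hφ _ (ne i hi) _ (nf j hj) hlt
      rw [← ve i hi, ← vf j hj, h1, h2, ve' i hi, vf' j hj] at a3
      by_contra hcon
      rcases (not_lt.1 hcon).lt_or_eq with h | h
      · have := hψ _ (nf' j hj) _ (ne' i hi) h
        omega
      · rw [h] at a3; omega
    · rw [← ve 0 hr, ← vf 0 hr, h1, h2, ve' 0 hr, vf' 0 hr] at a1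
      omega
  refine ⟨fun i j => ∃ e ∈ T, ∃ f ∈ T, vtx e 0 < vtx f 0 ∧ vtx e i < vtx f j, ?_⟩
  intro e he f hf h0 i hi j hj
  constructor
  · intro h
    exact ⟨e, he, f, hf, h0, h⟩
  · rintro ⟨e', he', f', hf', h0', h⟩
    exact main e' he' f' hf' e he f hf h0' h0 i hi j hj h

theorem rclique_pclique {r : ℕ} (hr : 0 < r) {T : Finset (Finset ℕ)} (hT : IsMatching r T)
    {R : ℕ → ℕ → Prop} (hR : RClique r vtx R T) : ∃ P, IsPattern r P ∧ IsPClique P T := by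
  classical
  by_cases hc : T.card ≤ 1
  · obtain ⟨P, hP⟩ := exists_ordered r 2 hr
    refine ⟨P, hP, fun e he f hf hef => ?_⟩
    exact absurd (Finset.card_le_one.1 hc e he f hf) hef
  · obtain ⟨e₀, he₀, f₀, hf₀, hne⟩ := Finset.one_lt_card.1 (not_le.1 hc)
    have hsub : ∀ e ∈ T, ∀ f ∈ T, ({e, f} : Finset (Finset ℕ)) ⊆ T := by
      intro e he f hf x hx
      simp only [Finset.mem_insert, Finset.mem_singleton] at hx
      rcases hx with rfl | rfl <;> assumption
    obtain ⟨P, hP, hiso⟩ := compress (hT.mono (hsub e₀ he₀ f₀ hf₀)) (Finset.card_pair hne)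
    refine ⟨P, hP, fun e he f hf hef => ?_⟩
    refine MatchIso.trans (rclique_iso hr (hT.mono (hsub e he f hf)) (hT.mono (hsub e₀ he₀ f₀ hf₀))
      (by rw [Finset.card_pair hne, Finset.card_pair hef]) (R := R) ?_ ?_) hiso
    · exact fun a ha b hb => hR a (hsub e he f hf ha) b (hsub e he f hf hb)
    · exact fun a ha b hb => hR a (hsub e₀ he₀ f₀ hf₀ ha) b (hsub e₀ he₀ f₀ hf₀ hb)

theorem clique_bdd (r : ℕ) (M : Finset (Finset ℕ)) :
    BddAbove {k | ∃ P, IsPattern r P ∧ ∃ M' ⊆ M, IsPClique P M' ∧ M'.card = k} := by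
  refine ⟨M.card, ?_⟩
  rintro k ⟨P, -, M', hM', -, rfl⟩
  exact Finset.card_le_card hM'

theorem twin_bdd (M : Finset (Finset ℕ)) : BddAbove {k | HasTwins M k} := by
  refine ⟨M.card, ?_⟩
  rintro k ⟨M₁, M₂, h1, -, -, -, rfl, -⟩
  exact Finset.card_le_card h1

theorem clique_half_le {r : ℕ} (hr : 0 < r) {M : Finset (Finset ℕ)} (hM : IsMatching r M) :
    cliqueMax r M / 2 ≤ twinMax M := by
  classical
  obtain ⟨P₀, hP₀⟩ := exists_ordered r 2 hr
  have hmem : cliqueMax r M ∈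
      {k | ∃ P, IsPattern r P ∧ ∃ M' ⊆ M, IsPClique P M' ∧ M'.card = k} :=
    Nat.sSup_mem ⟨0, P₀, hP₀, ∅, by simp, by intro e he; simp at he, by simp⟩ (clique_bdd r M)
  obtain ⟨P, hP, T, hTM, hcl, hcard⟩ := hmem
  have hT := hM.mono hTM
  obtain ⟨R, hR⟩ := pclique_rclique hr hT hcl
  set m := cliqueMax r M / 2 with hm
  obtain ⟨T₁, hT₁, hc₁⟩ := Finset.exists_subset_card_eq (s := T) (n := m) (by omega)
  obtain ⟨T₂, hT₂, hc₂⟩ := Finset.exists_subset_card_eq (s := T \ T₁) (n := m) (by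
    rw [Finset.card_sdiff_of_subset hT₁]; omega)
  have hT₂' : T₂ ⊆ T := hT₂.trans Finset.sdiff_subset
  apply le_csSup (twin_bdd M)
  refine ⟨T₁, T₂, hT₁.trans hTM, hT₂'.trans hTM, ?_, ?_, hc₁, hc₂⟩
  · rw [Finset.disjoint_left]
    intro x hx hx'
    obtain ⟨e, he, hxe⟩ := mem_mSupport.1 hx
    obtain ⟨f, hf, hxf⟩ := mem_mSupport.1 hx'
    have hef : e ≠ f := by
      rintro rfl
      exact (Finset.mem_sdiff.1 (hT₂ hf)).2 he
    exact Finset.disjoint_left.1 (hT.2 e (hT₁ he) f (hT₂' hf) hef) hxe hxf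
  · exact rclique_iso hr (hT.mono hT₁) (hT.mono hT₂') (by rw [hc₁, hc₂])
      (fun a ha b hb => hR a (hT₁ ha) b (hT₁ hb)) (fun a ha b hb => hR a (hT₂' ha) b (hT₂' hb))

theorem card_le_clique {r n : ℕ} (hr : 0 < r) (hn : 1 ≤ n) {M : Finset (Finset ℕ)}
    (hM : IsOrderedMatching r n M) : n ≤ (2 * cliqueMax r M) ^ (2 ^ r - 1) := by
  classical
  have hk : ∀ R, ∀ T ⊆ M, RClique r vtx R T → T.card ≤ cliqueMax r M := by
    intro R T hT hR
    obtain ⟨P, hP, hcl⟩ := rclique_pclique hr (hM.1.mono hT) hR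
    exact le_csSup (clique_bdd r M) ⟨P, hP, T, hT, hcl, rfl⟩
  have hpos : 1 ≤ cliqueMax r M := by
    have : M.Nonempty := Finset.card_pos.1 (by rw [hM.2.1]; omega)
    obtain ⟨e, he⟩ := this
    have := hk (fun _ _ => True) {e} (by simpa using he) (by
      intro a ha b hb hab
      simp only [Finset.mem_singleton] at ha hb
      subst ha; subst hb
      omega)
    simpa using this
  have := ramsey_final r hr vtx _ hpos M hM.1.vtx_lt hM.1.vtx_ne hk
  rwa [hM.2.1] at this

/-- For every `r ≥ 2` and `n ≥ 1`, `t^(r)(n) ≥ ⌊L_r(n)/2⌋`;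
consequently (with `L_r(n) ≥ (1/2)·n^{1/(2^r-1)}`),
`t^(r)(n) ≥ ⌊(1/4)·n^{1/(2^r-1)}⌋`. -/
theorem twins_from_cliques (r n : ℕ) (hr : 2 ≤ r) (hn : 1 ≤ n) :
    minClique r n / 2 ≤ minTwins r n ∧
    ⌊(1 / 4 : ℝ) * (n : ℝ) ^ ((1 : ℝ) / ((2 : ℝ) ^ r - 1))⌋₊ ≤ minTwins r n := by
    classical
  have hr0 : 0 < r := by omega
  obtain ⟨M₀, hM₀⟩ := exists_ordered r n hr0
  have hmem : minTwins r n ∈ {t | ∃ M, IsOrderedMatching r n M ∧ twinMax M = t} :=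
    Nat.sInf_mem ⟨_, M₀, hM₀, rfl⟩
  obtain ⟨M, hM, hMt⟩ := hmem
  rw [← hMt]
  have h1 := clique_half_le hr0 hM.1
  constructor
  · have h2 : minClique r n ≤ cliqueMax r M := Nat.sInf_le ⟨M, hM, rfl⟩
    exact (Nat.div_le_div_right h2).trans h1
  · refine le_trans ?_ h1
    have h2 := card_le_clique hr0 hn hM
    set L := cliqueMax r M
    have h4 : 2 ^ 2 ≤ 2 ^ r := Nat.pow_le_pow_right (by norm_num) hr
    have hd : ((2 ^ r - 1 : ℕ) : ℝ) = (2 : ℝ) ^ r - 1 := by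
      rw [Nat.cast_sub (by omega)]
      push_cast
      ring
    have h3 : (n : ℝ) ^ ((1 : ℝ) / ((2 : ℝ) ^ r - 1)) ≤ 2 * L := by
      have h5 : (n : ℝ) ≤ (2 * (L : ℝ)) ^ (2 ^ r - 1) := by exact_mod_cast h2
      calc (n : ℝ) ^ ((1 : ℝ) / ((2 : ℝ) ^ r - 1))
          ≤ ((2 * (L : ℝ)) ^ (2 ^ r - 1)) ^ ((1 : ℝ) / ((2 : ℝ) ^ r - 1)) :=
            Real.rpow_le_rpow (by positivity) h5 (by
              rw [← hd]; positivity)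
        _ = 2 * L := by
            rw [← hd, one_div]
            exact Real.pow_rpow_inv_natCast (by positivity) (by omega)
    rw [Nat.le_div_iff_mul_le (by norm_num)]
    have h6 := Nat.floor_le (a := (1 / 4 : ℝ) * (n : ℝ) ^ ((1 : ℝ) / ((2 : ℝ) ^ r - 1)))
      (by positivity)
    have h7 : ((⌊(1 / 4 : ℝ) * (n : ℝ) ^ ((1 : ℝ) / ((2 : ℝ) ^ r - 1))⌋₊ * 2 : ℕ) : ℝ) ≤ L := by
      push_cast
      linarith
    exact_mod_cast h7
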